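/- arXiv:2511.02048 — 4 statements merged into one kernel-verified Lean document; each statement's English description precedes it below -/
import Mathlib

section
/- For every n ∈ ℕ, every function f : {0,1}^n → ℝ, every value function V for f, every k ∈ {1,…,n}, and every ξ ∈ B_{n,k}, the inequality Δ̄(k; f, ξ) ≤ Δ̄(k−1; f, ξ) + Δ̄(k−1; f, ξ + e^k) + δ̄(k; f, ξ) holds. -/
/-!
Splitting the vectors that agree with `ξ` beyond position `k` according to their `k`-th
coordinate gives the Bellman recursion
`V*_k(ξ) = max (V*_{k-1}(ξ)) (V*_{k-1}(ξ + e^k))` (`Vstar_eq_max`). Since `max` is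
1-Lipschitz for the sup distance, replacing both `V*_{k-1}` values by `V_{k-1}` costs at most
the larger, hence at most the sum, of the two errors `Δ̄(k-1)`; the triangle inequality then
adds `δ̄(k)`.
-/

/-- `Vstar n f k ξ` is the optimal value `V*_k(ξ; f)`: the maximum of `f` over all
vectors agreeing with `ξ` on (0-indexed) positions `≥ k`. -/
noncomputable def Vstar (n : ℕ) (f : (Fin n → Bool) → ℝ) (k : ℕ) (ξ : Fin n → Bool) : ℝ :=
  (Finset.univ.filter (fun η : Fin n → Bool => ∀ j : Fin n, k ≤ j.val → η j = ξ j)).sup'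
    ⟨ξ, by simp⟩ f

/-- `upd n ξ p` is `ξ + e^{p+1}`, i.e. `ξ` with the (0-indexed) position `p` set to `1`. -/
def upd (n : ℕ) (ξ : Fin n → Bool) (p : ℕ) : Fin n → Bool :=
  fun j => if j.val = p then true else ξ j

/-- Bellman recursion for the optimal value. Only the `k`-th coordinate of `ξ` has to be `0`. -/
theorem Vstar_eq_max (n : ℕ) (f : (Fin n → Bool) → ℝ) (k : ℕ) (hk1 : 1 ≤ k)
    (ξ : Fin n → Bool) (hξ : ∀ j : Fin n, j.val = k - 1 → ξ j = false) :
    Vstar n f k ξ = max (Vstar n f (k - 1) ξ) (Vstar n f (k - 1) (upd n ξ (k - 1))) := by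
  apply le_antisymm
  · refine Finset.sup'_le _ _ fun η hη => ?_
    simp only [Finset.mem_filter, Finset.mem_univ, true_and] at hη
    by_cases h : ∀ j : Fin n, j.val = k - 1 → η j = false
    · refine le_max_of_le_left (Finset.le_sup' f ?_)
      simp only [Finset.mem_filter, Finset.mem_univ, true_and]
      intro j hj
      by_cases hjk : j.val = k - 1
      · rw [h j hjk, hξ j hjk]
      · exact hη j (by omega)
    · refine le_max_of_le_right (Finset.le_sup' f ?_)
      simp only [Finset.mem_filter, Finset.mem_univ, true_and]
      push Not at h
      obtain ⟨i, hi, hηi⟩ := h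
      intro j hj
      by_cases hjk : j.val = k - 1
      · obtain rfl : j = i := Fin.ext (hjk.trans hi.symm)
        simpa [upd, hjk] using hηi
      · simpa [upd, hjk] using hη j (by omega)
  · apply max_le
    · refine Finset.sup'_mono f (fun η hη => ?_) _
      simp only [Finset.mem_filter, Finset.mem_univ, true_and] at hη ⊢
      exact fun j hj => hη j (by omega)
    · refine Finset.sup'_mono f (fun η hη => ?_) _
      simp only [Finset.mem_filter, Finset.mem_univ, true_and] at hη ⊢
      intro j hj
      have hjk : j.val ≠ k - 1 := by omega
      simpa [upd, hjk] using hη j (by omega)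

/-- For every `n`, every `f : {0,1}^n → ℝ`, every value function `V`
for `f` (i.e. `V_0(·; f) = f`), every `k ∈ {1,…,n}` and `ξ ∈ B_{n,k}`,
`Δ̄(k; f, ξ) ≤ Δ̄(k−1; f, ξ) + Δ̄(k−1; f, ξ + e^k) + δ̄(k; f, ξ)`. -/
theorem Delta_le_Delta_add_Delta_add_delta (n : ℕ) (f : (Fin n → Bool) → ℝ)
    (V : ℕ → (Fin n → Bool) → ℝ) (hV0 : ∀ ξ, V 0 ξ = f ξ)
    (k : ℕ) (hk1 : 1 ≤ k) (hk2 : k ≤ n)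
    (ξ : Fin n → Bool) (hξ : ∀ j : Fin n, j.val < k → ξ j = false) :
    |Vstar n f k ξ - V k ξ| ≤
      |Vstar n f (k - 1) ξ - V (k - 1) ξ| +
      |Vstar n f (k - 1) (upd n ξ (k - 1)) - V (k - 1) (upd n ξ (k - 1))| +
      |max (V (k - 1) ξ) (V (k - 1) (upd n ξ (k - 1))) - V k ξ| := by
  rw [Vstar_eq_max n f k hk1 ξ fun j hj => hξ j (by omega)]
  refine (abs_sub_le _ (max (V (k - 1) ξ) (V (k - 1) (upd n ξ (k - 1)))) _).trans ?_
  gcongr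
  exact (abs_max_sub_max_le_max _ _ _ _).trans
    (max_le_add_of_nonneg (abs_nonneg _) (abs_nonneg _))
end

section
/- For every n ∈ ℕ, every function f : {0,1}^n → ℝ, every value function V for f, every k ∈ {1,…,n}, and every η ∈ B_{n,k}, the inequality Δ̄(k; f, η) ≤ Σ_{ℓ=1}^{k} Σ_{ξ ∈ Ξ_ℓ(η,k)} δ̄(ℓ; f, ξ) holds. -/
theorem Vstar_zero (n : ℕ) (f : (Fin n → Bool) → ℝ) (ξ : Fin n → Bool) :
    Vstar n f 0 ξ = f ξ := by
  unfold Vstar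
  apply le_antisymm
  · apply Finset.sup'_le
    intro ζ hζ
    have : ζ = ξ := funext fun j => (Finset.mem_filter.1 hζ).2 j (Nat.zero_le _)
    rw [this]
  · exact Finset.le_sup' f (by simp)

/-- The Bellman recursion for the optimal values. -/
theorem Vstar_succ (n : ℕ) (f : (Fin n → Bool) → ℝ) (k : ℕ) (hk : k < n) (η : Fin n → Bool)
    (hη : η ⟨k, hk⟩ = false) :
    Vstar n f (k + 1) η = max (Vstar n f k η) (Vstar n f k (upd n η k)) := by
  unfold Vstar
  apply le_antisymm
  · apply Finset.sup'_le
    intro ζ hζ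
    have hζ' := (Finset.mem_filter.1 hζ).2
    -- The value of `ζ` at position `k` decides which of the two maxima it competes in.
    cases hc : ζ ⟨k, hk⟩ with
    | false =>
      refine le_max_of_le_left (Finset.le_sup' f ?_)
      refine Finset.mem_filter.2 ⟨Finset.mem_univ _, fun j hj => ?_⟩
      rcases hj.eq_or_lt with h | h
      · have : j = ⟨k, hk⟩ := Fin.ext h.symm
        rw [this, hc, hη]
      · exact hζ' j h
    | true =>
      refine le_max_of_le_right (Finset.le_sup' f ?_)
      refine Finset.mem_filter.2 ⟨Finset.mem_univ _, fun j hj => ?_⟩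
      rcases hj.eq_or_lt with h | h
      · have : j = ⟨k, hk⟩ := Fin.ext h.symm
        rw [this, hc]
        simp [upd]
      · rw [hζ' j h]
        simp [upd, h.ne']
  · apply max_le
    · apply Finset.sup'_le
      intro ζ hζ
      have hζ' := (Finset.mem_filter.1 hζ).2
      exact Finset.le_sup' f
        (Finset.mem_filter.2 ⟨Finset.mem_univ _, fun j hj => hζ' j (by omega)⟩)
    · apply Finset.sup'_le
      intro ζ hζ
      have hζ' := (Finset.mem_filter.1 hζ).2
      refine Finset.le_sup' f (Finset.mem_filter.2 ⟨Finset.mem_univ _, fun j hj => ?_⟩)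
      rw [hζ' j (by omega)]
      have : j.val ≠ k := by omega
      simp [upd, this]

/-- For every `n`, `f : {0,1}^n → ℝ`, value function `V` for `f`,
`k ∈ {1,…,n}` and `η ∈ B_{n,k}`,
`Δ̄(k; f, η) ≤ Σ_{ℓ=1}^{k} Σ_{ξ ∈ Ξ_ℓ(η,k)} δ̄(ℓ; f, ξ)`, where
`Ξ_ℓ(η,k) = {ξ ∈ B_{n,ℓ} : ξ_j = η_j for j = k+1,…,n}`. -/
theorem Delta_le_sum_delta (n : ℕ) (f : (Fin n → Bool) → ℝ)
    (V : ℕ → (Fin n → Bool) → ℝ) (hV0 : ∀ ξ, V 0 ξ = f ξ)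
    (k : ℕ) (hk1 : 1 ≤ k) (hk2 : k ≤ n)
    (η : Fin n → Bool) (hη : ∀ j : Fin n, j.val < k → η j = false) :
    |Vstar n f k η - V k η| ≤
      ∑ ℓ ∈ Finset.Icc 1 k,
        ∑ ξ ∈ Finset.univ.filter (fun ξ : Fin n → Bool =>
            (∀ j : Fin n, j.val < ℓ → ξ j = false) ∧ (∀ j : Fin n, k ≤ j.val → ξ j = η j)),
          |max (V (ℓ - 1) ξ) (V (ℓ - 1) (upd n ξ (ℓ - 1))) - V ℓ ξ| := by
  clear hk1
  induction k generalizing η with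
  | zero => simp [Vstar_zero, hV0]
  | succ k ih =>
    have hk : k < n := hk2
    rw [Vstar_succ n f k hk η (hη _ (Nat.lt_succ_self k)),
      Finset.sum_Icc_succ_top (Nat.le_add_left 1 k)]
    -- Any `ζ` agreeing with `η` beyond position `k` has `Ξ_ℓ(ζ, k) ⊆ Ξ_ℓ(η, k + 1)`.
    have key : ∀ ζ : Fin n → Bool, (∀ j : Fin n, j.val < k → ζ j = false) →
        (∀ j : Fin n, k + 1 ≤ j.val → ζ j = η j) →
        |Vstar n f k ζ - V k ζ| ≤ ∑ ℓ ∈ Finset.Icc 1 k,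
          ∑ ξ ∈ Finset.univ.filter (fun ξ : Fin n → Bool =>
            (∀ j : Fin n, j.val < ℓ → ξ j = false) ∧ (∀ j : Fin n, k + 1 ≤ j.val → ξ j = η j)),
          |max (V (ℓ - 1) ξ) (V (ℓ - 1) (upd n ξ (ℓ - 1))) - V ℓ ξ| := by
      intro ζ h1 h2
      refine (ih hk.le ζ h1).trans (Finset.sum_le_sum fun ℓ _ => ?_)
      refine Finset.sum_le_sum_of_subset_of_nonneg (fun ξ hξ => ?_) fun _ _ _ => abs_nonneg _
      obtain ⟨_, h3, h4⟩ := Finset.mem_filter.1 hξ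
      exact Finset.mem_filter.2 ⟨Finset.mem_univ _, h3, fun j hj =>
        (h4 j (by omega)).trans (h2 j hj)⟩
    have hA := key η (fun j hj => hη j (by omega)) fun _ _ => rfl
    have hB := key (upd n η k)
      (fun j hj => by
        have : j.val ≠ k := by omega
        simpa [upd, this] using hη j (by omega))
      (fun j hj => by
        have : j.val ≠ k := by omega
        simp [upd, this])
    have hD : |max (V k η) (V k (upd n η k)) - V (k + 1) η| ≤
        ∑ ξ ∈ Finset.univ.filter (fun ξ : Fin n → Bool =>
            (∀ j : Fin n, j.val < k + 1 → ξ j = false) ∧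
              (∀ j : Fin n, k + 1 ≤ j.val → ξ j = η j)),
          |max (V (k + 1 - 1) ξ) (V (k + 1 - 1) (upd n ξ (k + 1 - 1))) - V (k + 1) ξ| :=
      Finset.single_le_sum
        (f := fun ξ => |max (V k ξ) (V k (upd n ξ k)) - V (k + 1) ξ|)
        (fun _ _ => abs_nonneg _)
        (Finset.mem_filter.2 ⟨Finset.mem_univ _, hη, fun _ _ => rfl⟩)
    exact (abs_sub_le _ (max (V k η) (V k (upd n η k))) _).trans
      (add_le_add ((abs_max_sub_max_le_max _ _ _ _).trans (max_le hA hB)) hD)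
end

section
/- Let i = (c, a, b) be a knapsack instance of dimension n with a_1,…,a_n > 0, let k ∈ {1,…,n}, and let ξ = (0,…,0, ξ_{k+1},…,ξ_n) ∈ {0,1}^n satisfy Σ_{j=k+1}^n a_j ξ_j ≤ b. Then V*(k; i, ξ) = max{ V*(k−1; i, ξ), c_k + V*(k−1; i, ξ + e^k) } if b ≥ a_k + Σ_{j=k+1}^n a_j ξ_j, and V*(k; i, ξ) = V*(k−1; i, ξ) otherwise, where e^k ∈ {0,1}^n is the unit vector with 1 in the k-th position. -/
/-- `headSum n k a x = Σ_{j=1}^{k} a_j x_j` (0-indexed positions `< k`). -/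
def headSum (n k : ℕ) (a : Fin n → ℝ) (x : Fin n → Bool) : ℝ :=
  ∑ j ∈ Finset.univ.filter (fun j : Fin n => j.val < k), if x j then a j else 0

/-- `tailSum n k a ξ = Σ_{j=k+1}^{n} a_j ξ_j` (0-indexed positions `≥ k`). -/
def tailSum (n k : ℕ) (a : Fin n → ℝ) (ξ : Fin n → Bool) : ℝ :=
  ∑ j ∈ Finset.univ.filter (fun j : Fin n => k ≤ j.val), if ξ j then a j else 0

/-- `knapSubVal n c a b k ξ` is `V*(k; i, ξ)` for the knapsack instance `i = (c,a,b)`: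
the maximum of `Σ_{j=1}^k c_j x_j` over `(x_1,…,x_k) ∈ {0,1}^k` subject to
`Σ_{j=1}^k a_j x_j ≤ b − Σ_{j=k+1}^n a_j ξ_j` (and `V*(0; i, ξ) = 0`). -/
noncomputable def knapSubVal (n : ℕ) (c a : Fin n → ℝ) (b : ℝ) (k : ℕ) (ξ : Fin n → Bool) : ℝ :=
  sSup {v | ∃ x : Fin n → Bool,
    headSum n k a x ≤ b - tailSum n k a ξ ∧ v = headSum n k c x}

lemma headSum_succ (n m : ℕ) (hm : m < n) (a : Fin n → ℝ) (x : Fin n → Bool) :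
    headSum n (m + 1) a x = (if x ⟨m, hm⟩ then a ⟨m, hm⟩ else 0) + headSum n m a x := by
  have h : Finset.univ.filter (fun j : Fin n => j.val < m + 1) =
      insert ⟨m, hm⟩ (Finset.univ.filter (fun j : Fin n => j.val < m)) := by
    ext j
    simp only [Finset.mem_filter, Finset.mem_univ, true_and, Finset.mem_insert, Fin.ext_iff]
    omega
  unfold headSum
  rw [h, Finset.sum_insert (by simp)]

lemma tailSum_eq_add (n m : ℕ) (hm : m < n) (a : Fin n → ℝ) (ξ : Fin n → Bool) :
    tailSum n m a ξ = (if ξ ⟨m, hm⟩ then a ⟨m, hm⟩ else 0) + tailSum n (m + 1) a ξ := by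
  have h : Finset.univ.filter (fun j : Fin n => m ≤ j.val) =
      insert ⟨m, hm⟩ (Finset.univ.filter (fun j : Fin n => m + 1 ≤ j.val)) := by
    ext j
    simp only [Finset.mem_filter, Finset.mem_univ, true_and, Finset.mem_insert, Fin.ext_iff]
    omega
  unfold tailSum
  rw [h, Finset.sum_insert (by simp)]

lemma headSum_congr (n m : ℕ) (a : Fin n → ℝ) (x y : Fin n → Bool)
    (h : ∀ j : Fin n, j.val < m → x j = y j) : headSum n m a x = headSum n m a y := by
  unfold headSum
  refine Finset.sum_congr rfl fun j hj => ?_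
  rw [h j (by simpa using hj)]

lemma tailSum_congr (n m : ℕ) (a : Fin n → ℝ) (x y : Fin n → Bool)
    (h : ∀ j : Fin n, m ≤ j.val → x j = y j) : tailSum n m a x = tailSum n m a y := by
  unfold tailSum
  refine Finset.sum_congr rfl fun j hj => ?_
  rw [h j (by simpa using hj)]

lemma headSum_nonneg (n m : ℕ) (a : Fin n → ℝ) (ha : ∀ j, 0 < a j) (x : Fin n → Bool) :
    0 ≤ headSum n m a x := by
  unfold headSum
  refine Finset.sum_nonneg fun j _ => ?_
  split_ifs
  exacts [(ha j).le, le_rfl]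

/-- With nonnegative residual capacity the set of attainable values is finite and contains the value
of the empty choice, so its supremum is a maximum. -/
lemma isGreatest_knapSubVal (n : ℕ) (c a : Fin n → ℝ) (b : ℝ) (k : ℕ) (ξ : Fin n → Bool)
    (h : tailSum n k a ξ ≤ b) :
    IsGreatest {v | ∃ x : Fin n → Bool,
      headSum n k a x ≤ b - tailSum n k a ξ ∧ v = headSum n k c x} (knapSubVal n c a b k ξ) := by
  have hfin : {v | ∃ x : Fin n → Bool,
      headSum n k a x ≤ b - tailSum n k a ξ ∧ v = headSum n k c x}.Finite :=
    (Set.finite_range (headSum n k c)).subset (by rintro v ⟨x, -, rfl⟩; exact ⟨x, rfl⟩)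
  have hne : {v | ∃ x : Fin n → Bool,
      headSum n k a x ≤ b - tailSum n k a ξ ∧ v = headSum n k c x}.Nonempty :=
    ⟨_, fun _ => false, by simpa [headSum] using h, rfl⟩
  exact ⟨hne.csSup_mem hfin, fun v hv => le_csSup hfin.bddAbove hv⟩

/-- For a knapsack instance `i = (c,a,b)` of dimension `n` with
`a_j > 0`, `k ∈ {1,…,n}` and `ξ = (0,…,0,ξ_{k+1},…,ξ_n)` with `Σ_{j>k} a_j ξ_j ≤ b`:
`V*(k; i, ξ) = max{ V*(k−1; i, ξ), c_k + V*(k−1; i, ξ + e^k) }` if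
`b ≥ a_k + Σ_{j>k} a_j ξ_j`, and `V*(k; i, ξ) = V*(k−1; i, ξ)` otherwise. -/
theorem knapSubVal_rec (n : ℕ) (c a : Fin n → ℝ) (b : ℝ) (ha : ∀ j, 0 < a j)
    (k : ℕ) (hk1 : 1 ≤ k) (hk2 : k ≤ n)
    (ξ : Fin n → Bool) (hξ : ∀ j : Fin n, j.val < k → ξ j = false)
    (hfeas : tailSum n k a ξ ≤ b) :
    (a ⟨k - 1, by omega⟩ + tailSum n k a ξ ≤ b →
      knapSubVal n c a b k ξ =
        max (knapSubVal n c a b (k - 1) ξ)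
            (c ⟨k - 1, by omega⟩ + knapSubVal n c a b (k - 1) (upd n ξ (k - 1)))) ∧
    (b < a ⟨k - 1, by omega⟩ + tailSum n k a ξ →
      knapSubVal n c a b k ξ = knapSubVal n c a b (k - 1) ξ) := by
  obtain ⟨m, rfl⟩ : ∃ m, k = m + 1 := ⟨k - 1, by omega⟩
  have hm : m < n := hk2
  simp only [Nat.add_sub_cancel]
  have ht : tailSum n m a ξ = tailSum n (m + 1) a ξ := by
    rw [tailSum_eq_add n m hm, hξ ⟨m, hm⟩ (Nat.lt_succ_self m)]
    simp
  have ht' : tailSum n m a (upd n ξ m) = a ⟨m, hm⟩ + tailSum n (m + 1) a ξ := by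
    rw [tailSum_eq_add n m hm, tailSum_congr n (m + 1) a (upd n ξ m) ξ]
    · simp [upd]
    · intro j hj
      have : j.val ≠ m := by omega
      simp [upd, this]
  obtain ⟨⟨x, hx, hxv⟩, hub⟩ := isGreatest_knapSubVal n c a b (m + 1) ξ hfeas
  obtain ⟨⟨y, hy, hyv⟩, hub0⟩ := isGreatest_knapSubVal n c a b m ξ (ht.trans_le hfeas)
  rw [headSum_succ n m hm] at hx hxv
  -- An optimal choice `y` for the first `m` items, extended by leaving out the item at position
  -- `m`, stays feasible and keeps its value.
  have hlow : knapSubVal n c a b m ξ ≤ knapSubVal n c a b (m + 1) ξ := by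
    have hcongr : ∀ w : Fin n → ℝ,
        headSum n (m + 1) w (fun j => if j.val = m then false else y j) = headSum n m w y := by
      intro w
      rw [headSum_succ n m hm, headSum_congr n m w _ y (fun j hj => by simp [hj.ne])]
      simp
    exact hub ⟨_, by rw [hcongr, ← ht]; exact hy, by rw [hcongr]; exact hyv⟩
  refine ⟨fun hfit => ?_, fun hnot => ?_⟩
  · obtain ⟨⟨z, hz, hzv⟩, hub1⟩ :=
      isGreatest_knapSubVal n c a b m (upd n ξ m) (ht'.trans_le hfit)
    apply le_antisymm
    · cases hxm : x ⟨m, hm⟩ with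
      | false =>
        simp only [hxm, Bool.false_eq_true, if_false, zero_add] at hx hxv
        exact le_max_of_le_left (hub0 ⟨x, by rw [ht]; exact hx, hxv⟩)
      | true =>
        simp only [hxm, if_true] at hx hxv
        have h1 : headSum n m c x ≤ knapSubVal n c a b m (upd n ξ m) :=
          hub1 ⟨x, by rw [ht']; linarith, rfl⟩
        exact le_max_of_le_right (by linarith)
    · refine max_le hlow ?_
      have hcongr : ∀ w : Fin n → ℝ,
          headSum n (m + 1) w (upd n z m) = w ⟨m, hm⟩ + headSum n m w z := by
        intro w
        rw [headSum_succ n m hm, headSum_congr n m w _ z (fun j hj => by simp [upd, hj.ne])]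
        simp [upd]
      exact hub ⟨upd n z m, by rw [hcongr]; linarith, by rw [hcongr, hzv]⟩
  · refine le_antisymm ?_ hlow
    cases hxm : x ⟨m, hm⟩ with
    | false =>
      simp only [hxm, Bool.false_eq_true, if_false, zero_add] at hx hxv
      exact hub0 ⟨x, by rw [ht]; exact hx, hxv⟩
    | true =>
      simp only [hxm, if_true] at hx
      linarith [headSum_nonneg n m a ha x]
end

section
/- Let (G, w) be a weighted finite graph with nodes i_1 < ⋯ < i_k, and let V be any real-valued function on weighted subgraphs of (G, w) with V of the empty graph equal to 0. Then there exist nonnegative integer coefficients α_H, indexed by the nonempty weighted subgraphs (H, w_H) of (G, w), such that |V*(G,w) − V(G,w)| ≤ Σ_{H ⊆ G} α_H · |max{ V(H∖{i_H}, w_H∖{i_H}), w_{i_H} + V(H∖N(i_H), w_H∖N(i_H)) } − V(H, w_H)|, where i_H denotes the node of highest index belonging to H and N(i_H) is the closed neighborhood of i_H in H. -/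
/-!
The optimal value obeys the dynamic programming recursion
`V*(H) = max {V*(H ∖ {i}), w_i + V*(H ∖ N(i))}` for every node `i` of `H`
(`indepVal_eq_max`: split the independent sets according to whether they contain `i`).
Since `max` is 1-Lipschitz for the sup norm, taking `i = i_H` gives
`|V*(H) - V(H)| ≤ |V*(H ∖ {i}) - V(H ∖ {i})| + |V*(H ∖ N(i)) - V(H ∖ N(i))| + err(H)`,
where `err(H)` (`bellmanErr`) is the one-step error of `V` at `H`. Strong induction on the node
set turns this into the desired bound, with coefficients that depend on neither `w` nor `V`
(`exists_coeff`).
-/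

/-- `indepVal G w s` is `V*(H, w_H)` for the weighted subgraph of `(G, w)` induced on
the node set `s`: the maximum of `Σ_{i∈S} w_i` over independent sets `S ⊆ s`
(the value of the empty graph is `0`). -/
noncomputable def indepVal {α : Type*} [Fintype α] [DecidableEq α]
    (G : SimpleGraph α) [DecidableRel G.Adj] (w : α → ℝ) (s : Finset α) : ℝ :=
  (s.powerset.filter (fun S => ∀ i ∈ S, ∀ j ∈ S, ¬ G.Adj i j)).sup'
    ⟨∅, by simp⟩ (fun S => ∑ i ∈ S, w i)

/-- `closedNbhd G i` is the closed neighborhood `N(i)` of `i`: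
`i` together with all nodes adjacent to `i`. -/
def closedNbhd {α : Type*} [Fintype α] [DecidableEq α]
    (G : SimpleGraph α) [DecidableRel G.Adj] (i : α) : Finset α :=
  insert i (Finset.univ.filter (fun j => G.Adj i j))

/-- The one-step (Bellman) error of `V` at the subgraph induced on `H`, with the node of
highest index as pivot; it is set to `0` when `H` is empty. -/
noncomputable def bellmanErr {α : Type*} [Fintype α] [LinearOrder α]
    (G : SimpleGraph α) [DecidableRel G.Adj] (w : α → ℝ) (V : Finset α → ℝ)
    (H : Finset α) : ℝ :=
  if h : H.Nonempty then
    |max (V (H.erase (H.max' h))) (w (H.max' h) + V (H \ closedNbhd G (H.max' h))) - V H|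
  else 0

lemma bellmanErr_nonneg {α : Type*} [Fintype α] [LinearOrder α]
    (G : SimpleGraph α) [DecidableRel G.Adj] (w : α → ℝ) (V : Finset α → ℝ)
    (H : Finset α) : 0 ≤ bellmanErr G w V H := by
  unfold bellmanErr
  split_ifs <;> positivity

lemma sum_le_indepVal {α : Type*} [Fintype α] [DecidableEq α]
    (G : SimpleGraph α) [DecidableRel G.Adj] (w : α → ℝ) {s S : Finset α}
    (hS : S ⊆ s) (hind : ∀ i ∈ S, ∀ j ∈ S, ¬ G.Adj i j) :
    ∑ i ∈ S, w i ≤ indepVal G w s :=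
  Finset.le_sup' (fun S => ∑ i ∈ S, w i)
    (Finset.mem_filter.mpr ⟨Finset.mem_powerset.mpr hS, hind⟩)

lemma exists_sum_eq_indepVal {α : Type*} [Fintype α] [DecidableEq α]
    (G : SimpleGraph α) [DecidableRel G.Adj] (w : α → ℝ) (s : Finset α) :
    ∃ S ⊆ s, (∀ i ∈ S, ∀ j ∈ S, ¬ G.Adj i j) ∧ indepVal G w s = ∑ i ∈ S, w i := by
  obtain ⟨S, hS, h⟩ := Finset.exists_mem_eq_sup'
    (s := s.powerset.filter (fun S => ∀ i ∈ S, ∀ j ∈ S, ¬ G.Adj i j))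
    ⟨∅, by simp⟩ (fun S => ∑ i ∈ S, w i)
  rw [Finset.mem_filter, Finset.mem_powerset] at hS
  exact ⟨S, hS.1, hS.2, h⟩

lemma indepVal_empty {α : Type*} [Fintype α] [DecidableEq α]
    (G : SimpleGraph α) [DecidableRel G.Adj] (w : α → ℝ) : indepVal G w ∅ = 0 := by
  obtain ⟨S, hS, -, h⟩ := exists_sum_eq_indepVal G w ∅
  rw [h, Finset.subset_empty.mp hS, Finset.sum_empty]

/-- The dynamic programming recursion for the maximum weight independent set: an independent
subset of `s` either avoids `i`, or is `i` together with an independent set disjoint from the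
closed neighborhood of `i`. -/
lemma indepVal_eq_max {α : Type*} [Fintype α] [DecidableEq α]
    (G : SimpleGraph α) [DecidableRel G.Adj] (w : α → ℝ) {s : Finset α} {i : α} (hi : i ∈ s) :
    indepVal G w s =
      max (indepVal G w (s.erase i)) (w i + indepVal G w (s \ closedNbhd G i)) := by
  apply le_antisymm
  · obtain ⟨S, hS, hind, h⟩ := exists_sum_eq_indepVal G w s
    rw [h]
    by_cases hiS : i ∈ S
    · apply le_max_of_le_right
      rw [← Finset.add_sum_erase S w hiS]
      gcongr
      apply sum_le_indepVal
      · intro j hj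
        rw [Finset.mem_erase] at hj
        simp only [closedNbhd, Finset.mem_sdiff, Finset.mem_insert, Finset.mem_filter,
          Finset.mem_univ, true_and, not_or]
        exact ⟨hS hj.2, hj.1, hind i hiS j hj.2⟩
      · exact fun a ha b hb => hind a (Finset.mem_of_mem_erase ha) b (Finset.mem_of_mem_erase hb)
    · exact le_max_of_le_left (sum_le_indepVal G w (Finset.subset_erase.mpr ⟨hS, hiS⟩) hind)
  · apply max_le
    · obtain ⟨S, hS, hind, h⟩ := exists_sum_eq_indepVal G w (s.erase i)
      rw [h]
      exact sum_le_indepVal G w (hS.trans (Finset.erase_subset _ _)) hind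
    · obtain ⟨S, hS, hind, h⟩ := exists_sum_eq_indepVal G w (s \ closedNbhd G i)
      have hN : ∀ j ∈ S, j ∈ s ∧ j ≠ i ∧ ¬ G.Adj i j := by
        intro j hj
        simpa [closedNbhd] using hS hj
      have hiS : i ∉ S := fun hc => (hN i hc).2.1 rfl
      rw [h, ← Finset.sum_insert hiS]
      apply sum_le_indepVal
      · exact Finset.insert_subset hi fun j hj => (hN j hj).1
      · intro a ha b hb
        rcases Finset.mem_insert.mp ha with rfl | haS <;>
          rcases Finset.mem_insert.mp hb with rfl | hb
        · exact G.irrefl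
        · exact (hN b hb).2.2
        · exact fun hab => (hN a haS).2.2 hab.symm
        · exact hind a haS b hb

/-- One step of error propagation: the recursion for `indepVal` compared with the same
recursion applied to `V`. -/
lemma abs_indepVal_sub_le {α : Type*} [Fintype α] [LinearOrder α]
    (G : SimpleGraph α) [DecidableRel G.Adj] (w : α → ℝ) (V : Finset α → ℝ)
    {s : Finset α} (hs : s.Nonempty) :
    |indepVal G w s - V s| ≤
      |indepVal G w (s.erase (s.max' hs)) - V (s.erase (s.max' hs))| +
      |indepVal G w (s \ closedNbhd G (s.max' hs)) - V (s \ closedNbhd G (s.max' hs))| +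
      bellmanErr G w V s := by
  rw [indepVal_eq_max G w (s.max'_mem hs), bellmanErr, dif_pos hs]
  refine (abs_sub_le _ _ _).trans (add_le_add_left ?_ _)
  refine (abs_max_sub_max_le_max _ _ _ _).trans ?_
  rw [add_sub_add_left_eq_sub]
  exact max_le_add_of_nonneg (abs_nonneg _) (abs_nonneg _)

/-- The bound with coefficients uniform in the weights and in the approximation `V`. -/
lemma exists_coeff {α : Type*} [Fintype α] [LinearOrder α]
    (G : SimpleGraph α) [DecidableRel G.Adj] (s : Finset α) :
    ∃ coeff : Finset α → ℕ, ∀ (w : α → ℝ) (V : Finset α → ℝ), V ∅ = 0 →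
      |indepVal G w s - V s| ≤
        ∑ H ∈ s.powerset.filter (fun H : Finset α => H.Nonempty),
          (coeff H : ℝ) * bellmanErr G w V H := by
  induction s using Finset.strongInduction with
  | H s ih =>
    rcases s.eq_empty_or_nonempty with rfl | hs
    · refine ⟨0, fun w V hV => ?_⟩
      simp [indepVal_empty, hV]
    · have hm := s.max'_mem hs
      have ha : s.erase (s.max' hs) ⊂ s := Finset.erase_ssubset hm
      have hb : s \ closedNbhd G (s.max' hs) ⊂ s := by
        refine Finset.ssubset_iff_subset_ne.mpr ⟨Finset.sdiff_subset, fun h => ?_⟩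
        exact (Finset.mem_sdiff.mp (h.ge hm)).2 (Finset.mem_insert_self _ _)
      obtain ⟨c₁, h₁⟩ := ih _ ha
      obtain ⟨c₂, h₂⟩ := ih _ hb
      refine ⟨fun H => c₁ H + c₂ H + if H = s then 1 else 0, fun w V hV => ?_⟩
      -- The errors are nonnegative, so a sum over subgraphs of a smaller graph only grows
      -- when it is extended to all subgraphs of `s`.
      have mono : ∀ (c : Finset α → ℕ) {t : Finset α}, t ⊂ s →
          ∑ H ∈ t.powerset.filter (fun H : Finset α => H.Nonempty),
            (c H : ℝ) * bellmanErr G w V H ≤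
          ∑ H ∈ s.powerset.filter (fun H : Finset α => H.Nonempty),
            (c H : ℝ) * bellmanErr G w V H := fun c t ht =>
        Finset.sum_le_sum_of_subset_of_nonneg
          (Finset.filter_subset_filter _ (Finset.powerset_mono.mpr ht.subset))
          fun H _ _ => mul_nonneg (Nat.cast_nonneg _) (bellmanErr_nonneg G w V H)
      have hself : ∑ H ∈ s.powerset.filter (fun H : Finset α => H.Nonempty),
          ((if H = s then 1 else 0 : ℕ) : ℝ) * bellmanErr G w V H = bellmanErr G w V s := by
        rw [Finset.sum_eq_single_of_mem s (by simp [hs])]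
        · simp
        · intro H _ hne
          simp [hne]
      simp only [Nat.cast_add, add_mul, Finset.sum_add_distrib]
      rw [hself]
      have e₁ := (h₁ w V hV).trans (mono c₁ ha)
      have e₂ := (h₂ w V hV).trans (mono c₂ hb)
      have e₃ := abs_indepVal_sub_le G w V hs
      linarith

/-- For a weighted finite graph `(G, w)` with node set `s` and any
real-valued function `V` on weighted subgraphs (identified with their node sets,
with `V(∅) = 0`), there exist nonnegative integer coefficients `α_H`, indexed by the
nonempty subgraphs `H ⊆ s`, such that
`|V*(G,w) − V(G,w)| ≤ Σ_H α_H · |max{ V(H∖{i_H}), w_{i_H} + V(H∖N(i_H)) } − V(H)|`,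
where `i_H` is the node of highest index in `H`. -/
theorem indepVal_abs_sub_le_sum {α : Type*} [Fintype α] [LinearOrder α]
    (G : SimpleGraph α) [DecidableRel G.Adj] (w : α → ℝ)
    (V : Finset α → ℝ) (hV : V ∅ = 0) (s : Finset α) :
    ∃ coeff : Finset α → ℕ,
      |indepVal G w s - V s| ≤
        ∑ H ∈ (s.powerset.filter (fun H : Finset α => H.Nonempty)).attach,
          (coeff H.1 : ℝ) *
            |max (V (H.1.erase (H.1.max' (Finset.mem_filter.mp H.2).2)))
                 (w (H.1.max' (Finset.mem_filter.mp H.2).2) +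
                   V (H.1 \ closedNbhd G (H.1.max' (Finset.mem_filter.mp H.2).2))) -
             V H.1| := by
  obtain ⟨c, hc⟩ := exists_coeff G s
  refine ⟨c, (hc w V hV).trans_eq ?_⟩
  rw [← Finset.sum_attach]
  refine Finset.sum_congr rfl fun H _ => ?_
  rw [bellmanErr, dif_pos (Finset.mem_filter.mp H.2).2]
end
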